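/- Let f be a binary constraint with f not identically zero. Then f belongs to IM if and only if f(0,1)·f(1,0) = 0. -/

import Mathlib

/-- A (complex-valued Boolean) constraint of arity `k`. -/
abbrev Constraint (k : ℕ) : Type := (Fin k → Bool) → ℂ

/-- The binary equality constraint `EQ = [1,0,1]`, as a two-argument function. -/
def EQc : Bool → Bool → ℂ := fun a b => if a = b then 1 else 0

/-- The binary disequality constraint `XOR = [0,1,0]`, as a two-argument function. -/
def XORc : Bool → Bool → ℂ := fun a b => if a = b then 0 else 1

/-- The binary constraint `Implies = (1,1,0,1)`, as a two-argument function. -/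
def IMPc : Bool → Bool → ℂ := fun a b => if a = true ∧ b = false then 0 else 1

/-- The unary constraint `[a, b]` (value `a` on input `0`, value `b` on input `1`). -/
def unC (a b : ℂ) : Constraint 1 := fun x => if x 0 then b else a

/-- The binary constraint `(a,b,c,d) = (f(0,0), f(0,1), f(1,0), f(1,1))`. -/
def binC (a b c d : ℂ) : Constraint 2 := fun x =>
  if x 0 then (if x 1 then d else c) else (if x 1 then b else a)

/-- `OR = [0,1,1]`. -/
def ORc : Constraint 2 := binC 0 1 1 1

/-- `Implies = (1,1,0,1)` as a binary constraint. -/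
def Impliesc : Constraint 2 := binC 1 1 0 1

/-- Membership in `NZ`: the constraint is everywhere nonzero. -/
def inNZ {k : ℕ} (f : Constraint k) : Prop := ∀ x, f x ≠ 0

/-- Membership in `DG`: the constraint is a product of unary constraints, one per variable. -/
def inDG {k : ℕ} (f : Constraint k) : Prop :=
  ∃ g : Fin k → Bool → ℂ, ∀ x, f x = ∏ i, g i (x i)

/-- Membership in `ED`: the constraint is a product of at least one factor, each factor
being a unary constraint applied to some variable, or `EQ`/`XOR` applied to two variables. -/
def inED {k : ℕ} (f : Constraint k) : Prop :=
  ∃ (l1 l2 : ℕ) (h : Fin l1 → Bool → ℂ) (j : Fin l1 → Fin k)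
    (g : Fin l2 → Bool → Bool → ℂ) (m n : Fin l2 → Fin k),
    1 ≤ l1 + l2 ∧ (∀ i, g i = EQc ∨ g i = XORc) ∧
    ∀ x, f x = (∏ i, h i (x (j i))) * ∏ i, g i (x (m i)) (x (n i))

/-- Membership in `IM`: `f ∉ NZ` and `f` is a product of at least one factor, each factor
being a unary constraint applied to some variable, or `Implies` applied to two variables. -/
def inIM {k : ℕ} (f : Constraint k) : Prop :=
  ¬ inNZ f ∧
  ∃ (l1 l2 : ℕ) (h : Fin l1 → Bool → ℂ) (j : Fin l1 → Fin k)
    (m n : Fin l2 → Fin k),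
    1 ≤ l1 + l2 ∧
    ∀ x, f x = (∏ i, h i (x (j i))) * ∏ i, IMPc (x (m i)) (x (n i))

/-- The underlying relation `R_f = {x : f x ≠ 0}` of a constraint `f`. -/
def relOf {k : ℕ} (f : Constraint k) : Set (Fin k → Bool) := {x | f x ≠ 0}

/-- Factors allowed in an IMP-style factorization of a relation:
`Δ_c(x_i)` or `Implies(x_i, x_j)`. -/
inductive ImpFactor (k : ℕ) where
  | delta (c : Bool) (i : Fin k)
  | imp (i j : Fin k)
deriving DecidableEq

/-- Evaluation of an IMP-factor at an assignment. -/
def ImpFactor.eval {k : ℕ} : ImpFactor k → (Fin k → Bool) → Bool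
  | .delta c i, x => x i == c
  | .imp i j, x => !(x i) || x j

/-- `L` is a factor list for the relation `R`: the conjunction of the factors in `L` equals `R`. -/
def isFactorListFor {k : ℕ} (L : List (ImpFactor k)) (R : Set (Fin k → Bool)) : Prop :=
  ∀ x, x ∈ R ↔ ∀ fac ∈ L, fac.eval x = true

/-- Membership in `IMP`: the relation is the conjunction of a positive number of factors of the
forms `Δ_0(x)`, `Δ_1(x)`, `Implies(x,y)`. -/
def inIMP {k : ℕ} (R : Set (Fin k → Bool)) : Prop :=
  ∃ L : List (ImpFactor k), L ≠ [] ∧ isFactorListFor L R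

/-- `f` has imp support when `R_f ∈ IMP`. -/
def hasImpSupport {k : ℕ} (f : Constraint k) : Prop := inIMP (relOf f)

/-- A factor list is imp-distinctive if no variable occurs both in a `Δ_c` factor and in an
`Implies` factor, and no factor `Implies(x,x)` occurs. -/
def impDistinctive {k : ℕ} (L : List (ImpFactor k)) : Prop :=
  (∀ i : Fin k, ¬ ((∃ c, ImpFactor.delta c i ∈ L) ∧
      (∃ j, ImpFactor.imp i j ∈ L ∨ ImpFactor.imp j i ∈ L))) ∧
  (∀ i : Fin k, ImpFactor.imp i i ∉ L)

/-- Factors of the forms `Δ_c(x_i)` or `EQ(x_i,x_j)`. -/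
inductive EqFactor (k : ℕ) where
  | delta (c : Bool) (i : Fin k)
  | eq (i j : Fin k)
deriving DecidableEq

/-- Evaluation of such a factor at an assignment. -/
def EqFactor.eval {k : ℕ} : EqFactor k → (Fin k → Bool) → Bool
  | .delta c i, x => x i == c
  | .eq i j, x => x i == x j

/-- `f` is in simple form: its representing Boolean matrix (rows indexed by `R_f`) has
no all-`0` column, no all-`1` column, and no two identical columns. -/
def simpleForm {k : ℕ} (f : Constraint k) : Prop :=
  (∀ i : Fin k, ∃ a, f a ≠ 0 ∧ a i = true) ∧
  (∀ i : Fin k, ∃ a, f a ≠ 0 ∧ a i = false) ∧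
  (∀ i j : Fin k, i ≠ j → ∃ a, f a ≠ 0 ∧ a i ≠ a j)

/-- A constraint of unspecified arity. -/
abbrev Ctr : Type := Σ k : ℕ, Constraint k

/-- T-constructibility of a constraint from a set `G` of constraints, by finitely many
applications of permutation, pinning, projection, linking, expansion, multiplication,
and normalization. -/
inductive TCon (G : Set Ctr) : Ctr → Prop where
  | base {c : Ctr} : c ∈ G → TCon G c
  | perm {k : ℕ} {g : Constraint k} (σ : Equiv.Perm (Fin k)) :
      TCon G ⟨k, g⟩ → TCon G ⟨k, fun x => g (fun i => x (σ i))⟩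
  | pinning {k : ℕ} {g : Constraint (k+1)} (i : Fin (k+1)) (c : Bool) :
      TCon G ⟨k+1, g⟩ → TCon G ⟨k, fun x => g (i.insertNth c x)⟩
  | proj {k : ℕ} {g : Constraint (k+1)} (i : Fin (k+1)) :
      TCon G ⟨k+1, g⟩ →
      TCon G ⟨k, fun x => g (i.insertNth false x) + g (i.insertNth true x)⟩
  | link {k : ℕ} {g : Constraint (k+1)} (i : Fin (k+1)) (j : Fin k) :
      TCon G ⟨k+1, g⟩ → TCon G ⟨k, fun x => g (i.insertNth (x j) x)⟩
  | expand {k : ℕ} {g : Constraint k} (i : Fin (k+1)) :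
      TCon G ⟨k, g⟩ → TCon G ⟨k+1, fun x => g (fun j => x (i.succAbove j))⟩
  | mul {k : ℕ} {g₁ g₂ : Constraint k} :
      TCon G ⟨k, g₁⟩ → TCon G ⟨k, g₂⟩ → TCon G ⟨k, fun x => g₁ x * g₂ x⟩
  | norm {k : ℕ} {g : Constraint k} (lam : ℂ) (hlam : lam ≠ 0) :
      TCon G ⟨k, g⟩ → TCon G ⟨k, fun x => lam * g x⟩

/-- T-constructibility using no projection operation. -/
inductive TConNoProj (G : Set Ctr) : Ctr → Prop where
  | base {c : Ctr} : c ∈ G → TConNoProj G c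
  | perm {k : ℕ} {g : Constraint k} (σ : Equiv.Perm (Fin k)) :
      TConNoProj G ⟨k, g⟩ → TConNoProj G ⟨k, fun x => g (fun i => x (σ i))⟩
  | pinning {k : ℕ} {g : Constraint (k+1)} (i : Fin (k+1)) (c : Bool) :
      TConNoProj G ⟨k+1, g⟩ → TConNoProj G ⟨k, fun x => g (i.insertNth c x)⟩
  | link {k : ℕ} {g : Constraint (k+1)} (i : Fin (k+1)) (j : Fin k) :
      TConNoProj G ⟨k+1, g⟩ → TConNoProj G ⟨k, fun x => g (i.insertNth (x j) x)⟩
  | expand {k : ℕ} {g : Constraint k} (i : Fin (k+1)) :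
      TConNoProj G ⟨k, g⟩ → TConNoProj G ⟨k+1, fun x => g (fun j => x (i.succAbove j))⟩
  | mul {k : ℕ} {g₁ g₂ : Constraint k} :
      TConNoProj G ⟨k, g₁⟩ → TConNoProj G ⟨k, g₂⟩ →
      TConNoProj G ⟨k, fun x => g₁ x * g₂ x⟩
  | norm {k : ℕ} {g : Constraint k} (lam : ℂ) (hlam : lam ≠ 0) :
      TConNoProj G ⟨k, g⟩ → TConNoProj G ⟨k, fun x => lam * g x⟩

/-- Pinning the `i`-th variable of `f` to the bit `c`. -/
def pinC {k : ℕ} (f : Constraint (k+1)) (i : Fin (k+1)) (c : Bool) : Constraint k :=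
  fun x => f (i.insertNth c x)

/-- `R_f` admits a good factor list: a factor list consisting only of `Implies` factors,
in which every variable is incident to at least one edge of the induced imp graph,
and whose imp graph has no (directed) cycle. -/
def hasGoodFactorList {k : ℕ} (f : Constraint k) : Prop :=
  ∃ L : List (ImpFactor k),
    isFactorListFor L (relOf f) ∧
    (∀ fac ∈ L, ∃ i j, fac = ImpFactor.imp i j) ∧
    (∀ i : Fin k, ∃ j, ImpFactor.imp i j ∈ L ∨ ImpFactor.imp j i ∈ L) ∧
    ¬ ∃ i : Fin k, Relation.TransGen (fun a b => ImpFactor.imp a b ∈ L) i i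

/-! The support of a product of unary and `Implies` factors is a sublattice of `{0,1}^k`: `Implies`
is the order relation of `Bool`, and `⊓` and `⊔` are monotone on `Bool` and always return one of
their arguments, so they preserve unary constraints as well. A support containing the incomparable
points `(0,1)` and `(1,0)` is therefore all of `{0,1}²`. Conversely, a `g` with `g(1,0) = 0` equals
`(g(a,1) / g(0,1)) · g(0,b) · Implies(a,b)` when `g(0,1) ≠ 0`, and is otherwise supported on the
diagonal, so equals `g(a,a) · Implies(a,b) · Implies(b,a)`. -/

/-- Products of at least one factor, each a unary constraint applied to some variable or `Implies`
applied to two variables: the factorization condition in the definition of `IM`, without the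
condition `f ∉ NZ`. -/
def IsImpliesProduct {k : ℕ} (f : Constraint k) : Prop :=
  ∃ (l1 l2 : ℕ) (h : Fin l1 → Bool → ℂ) (j : Fin l1 → Fin k) (m n : Fin l2 → Fin k),
    1 ≤ l1 + l2 ∧ ∀ x, f x = (∏ i, h i (x (j i))) * ∏ i, IMPc (x (m i)) (x (n i))

lemma vec_eta_fin_two {α : Type*} (x : Fin 2 → α) : ![x 0, x 1] = x :=
  FinVec.etaExpand_eq x

lemma IMPc_ne_zero_iff {a b : Bool} : IMPc a b ≠ 0 ↔ a ≤ b := by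
  cases a <;> cases b <;> simp [IMPc]

namespace IsImpliesProduct

variable {k : ℕ}

lemma unary (h : Bool → ℂ) (i : Fin k) : IsImpliesProduct fun x => h (x i) :=
  ⟨1, 0, fun _ => h, fun _ => i, Fin.elim0, Fin.elim0, le_rfl, fun x => by simp⟩

lemma implies (i j : Fin k) : IsImpliesProduct fun x => IMPc (x i) (x j) :=
  ⟨0, 1, Fin.elim0, Fin.elim0, fun _ => i, fun _ => j, le_rfl, fun x => by simp⟩

lemma mul {f g : Constraint k} (hf : IsImpliesProduct f) (hg : IsImpliesProduct g) :
    IsImpliesProduct fun x => f x * g x := by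
  obtain ⟨l1, l2, h, j, m, n, hl, hfx⟩ := hf
  obtain ⟨l1', l2', h', j', m', n', -, hgx⟩ := hg
  refine ⟨l1 + l1', l2 + l2', Fin.append h h', Fin.append j j', Fin.append m m',
    Fin.append n n', by omega, fun x => ?_⟩
  simp only [hfx, hgx, Fin.prod_univ_add, Fin.append_left, Fin.append_right]
  exact mul_mul_mul_comm _ _ _ _

lemma map₂_ne_zero {f : Constraint k} (hf : IsImpliesProduct f) {op : Bool → Bool → Bool}
    (op_choice : ∀ a b, op a b = a ∨ op a b = b)
    (op_mono : ∀ {a b c d}, a ≤ b → c ≤ d → op a c ≤ op b d)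
    {x y : Fin k → Bool} (hx : f x ≠ 0) (hy : f y ≠ 0) : f (fun i => op (x i) (y i)) ≠ 0 := by
  obtain ⟨l1, l2, h, j, m, n, -, hfx⟩ := hf
  simp only [hfx, mul_ne_zero_iff, Finset.prod_ne_zero_iff, Finset.mem_univ, true_imp_iff,
    IMPc_ne_zero_iff] at hx hy ⊢
  refine ⟨fun i => ?_, fun i => op_mono (hx.2 i) (hy.2 i)⟩
  rcases op_choice (x (j i)) (y (j i)) with hop | hop <;> rw [hop]
  exacts [hx.1 i, hy.1 i]

lemma inf_ne_zero {f : Constraint k} (hf : IsImpliesProduct f) {x y : Fin k → Bool}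
    (hx : f x ≠ 0) (hy : f y ≠ 0) : f (x ⊓ y) ≠ 0 :=
  hf.map₂_ne_zero min_choice inf_le_inf hx hy

lemma sup_ne_zero {f : Constraint k} (hf : IsImpliesProduct f) {x y : Fin k → Bool}
    (hx : f x ≠ 0) (hy : f y ≠ 0) : f (x ⊔ y) ≠ 0 :=
  hf.map₂_ne_zero max_choice sup_le_sup hx hy

lemma inNZ_of_apply_ne_zero {f : Constraint 2} (hf : IsImpliesProduct f)
    (h01 : f ![false, true] ≠ 0) (h10 : f ![true, false] ≠ 0) : inNZ f := by
  have h00 : f ![false, false] ≠ 0 := by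
    rw [show ![false, false] = ![false, true] ⊓ ![true, false] by decide]
    exact hf.inf_ne_zero h01 h10
  have h11 : f ![true, true] ≠ 0 := by
    rw [show ![true, true] = ![false, true] ⊔ ![true, false] by decide]
    exact hf.sup_ne_zero h01 h10
  intro x
  rw [← vec_eta_fin_two x]
  cases x 0 <;> cases x 1 <;> assumption

lemma of_apply_true_false_eq_zero {g : Bool → Bool → ℂ} (h10 : g true false = 0) (i j : Fin k) :
    IsImpliesProduct fun x => g (x i) (x j) := by
  by_cases h01 : g false true = 0
  · have g_eq (a b : Bool) : g a b = g a a * (IMPc a b * IMPc b a) := by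
      cases a <;> cases b <;> simp [IMPc, h01, h10]
    simpa only [← g_eq] using (unary (fun a => g a a) i).mul ((implies i j).mul (implies j i))
  · have g_eq (a b : Bool) : g a b = g a true / g false true * g false b * IMPc a b := by
      cases a <;> cases b <;> simp [IMPc, h01, h10]
    simpa only [← g_eq] using
      ((unary (fun a => g a true / g false true) i).mul (unary (g false) j)).mul (implies i j)

lemma of_apply_mul_apply_eq_zero {g : Bool → Bool → ℂ} (h : g false true * g true false = 0)
    (i j : Fin k) : IsImpliesProduct fun x => g (x i) (x j) := by
  rcases mul_eq_zero.1 h with h01 | h10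
  · exact of_apply_true_false_eq_zero (g := flip g) h01 j i
  · exact of_apply_true_false_eq_zero h10 i j

end IsImpliesProduct

/-- For a binary constraint `f` not identically zero,
`f ∈ IM` iff `f(0,1)·f(1,0) = 0`. -/
theorem stmt17 (f : Constraint 2) (hf : ∃ x, f x ≠ 0) :
    inIM f ↔ f ![false, true] * f ![true, false] = 0 := by
  constructor
  · rintro ⟨not_nz, hprod : IsImpliesProduct f⟩
    by_contra hne
    obtain ⟨h01, h10⟩ := mul_ne_zero_iff.1 hne
    exact not_nz (hprod.inNZ_of_apply_ne_zero h01 h10)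
  · intro h0
    have hprod : IsImpliesProduct f := by
      simpa only [vec_eta_fin_two] using
        IsImpliesProduct.of_apply_mul_apply_eq_zero (g := fun a b => f ![a, b]) h0 (0 : Fin 2) 1
    exact ⟨fun hnz => mul_ne_zero (hnz _) (hnz _) h0, hprod⟩
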